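/- Under the scaled ABS recursion, suppose A has full row rank m and V = (v₁,…,v_m) ∈ ℝ^{m×m} is nonsingular. Then the solution set of A x = b is exactly { x_{m+1} + H_{m+1}ᵀ q : q ∈ ℝⁿ }; that is, every vector of this form solves A x = b, and every solution x of A x = b can be written as x = x_{m+1} + H_{m+1}ᵀ q for some q ∈ ℝⁿ. -/

import Mathlib

open Matrix

/-! Scaled ABS applied to `A y = b` is the unscaled method applied to the equations `aᵢ ⬝ y = βᵢ`
with `aᵢ = Aᵀ vᵢ` and `βᵢ = vᵢ ⬝ b`, which are equivalent to `A y = b` since `V` is nonsingular.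
The update of `H` cuts its row space down to the hyperplane orthogonal to `aᵢ`, while the new
iterate satisfies `aᵢ ⬝ xᵢ₊₁ = βᵢ` and moves only inside the old row space. Hence each step
intersects the affine space `xᵢ + rowspace Hᵢ` with the hyperplane `aᵢ ⬝ y = βᵢ`. -/

section ABS

variable {K n : Type*} [Field K] [Fintype n]

/-- The ABS update of the projection matrix `H` (the *Abaffian*) for an equation with coefficient
vector `a`, with parameter `w`; meaningful when `w ⬝ᵥ (H *ᵥ a) ≠ 0`. -/
def abaffianUpdate (H : Matrix n n K) (a w : n → K) : Matrix n n K :=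
  H - (w ⬝ᵥ (H *ᵥ a))⁻¹ • vecMulVec (H *ᵥ a) (w ᵥ* H)

/-- The ABS update of the iterate `x`: the point of the line through `x` with direction `p` that
solves the equation `a ⬝ᵥ y = β`; meaningful when `a ⬝ᵥ p ≠ 0`. -/
def hyperplaneStep (a : n → K) (β : K) (p x : n → K) : n → K :=
  x - ((a ⬝ᵥ x - β) / (a ⬝ᵥ p)) • p

theorem vecMul_abaffianUpdate (H : Matrix n n K) (a w q : n → K) :
    q ᵥ* abaffianUpdate H a w =
      (q - ((q ᵥ* H ⬝ᵥ a) / (w ᵥ* H ⬝ᵥ a)) • w) ᵥ* H := by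
  rw [abaffianUpdate, vecMul_sub, vecMul_smul, vecMul_vecMulVec, sub_vecMul, smul_vecMul, smul_smul,
    dotProduct_mulVec, dotProduct_mulVec, div_eq_inv_mul]

theorem mem_range_vecMulLinear_abaffianUpdate {H : Matrix n n K} {a w : n → K}
    (hw : w ⬝ᵥ (H *ᵥ a) ≠ 0) {u : n → K} :
    u ∈ LinearMap.range (abaffianUpdate H a w).vecMulLinear ↔
      u ∈ LinearMap.range H.vecMulLinear ∧ a ⬝ᵥ u = 0 := by
  rw [dotProduct_mulVec] at hw
  simp only [LinearMap.mem_range, vecMulLinear_apply, vecMul_abaffianUpdate]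
  constructor
  · rintro ⟨q, rfl⟩
    refine ⟨⟨_, rfl⟩, ?_⟩
    rw [dotProduct_comm, sub_vecMul, smul_vecMul, sub_dotProduct, smul_dotProduct, smul_eq_mul,
      div_mul_cancel₀ _ hw, sub_self]
  · rintro ⟨⟨q, rfl⟩, hq⟩
    refine ⟨q, ?_⟩
    rw [dotProduct_comm, hq, zero_div, zero_smul, sub_zero]

theorem dotProduct_hyperplaneStep {a p : n → K} (hp : a ⬝ᵥ p ≠ 0) (β : K) (x : n → K) :
    a ⬝ᵥ hyperplaneStep a β p x = β := by
  rw [hyperplaneStep, dotProduct_sub, dotProduct_smul, smul_eq_mul, div_mul_cancel₀ _ hp,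
    sub_sub_cancel]

theorem sub_hyperplaneStep_mem_iff {S : Submodule K (n → K)} {p : n → K} (hp : p ∈ S)
    (a : n → K) (β : K) (x y : n → K) : y - hyperplaneStep a β p x ∈ S ↔ y - x ∈ S := by
  rw [hyperplaneStep, sub_sub_eq_add_sub, add_sub_right_comm]
  exact S.add_mem_iff_left (S.smul_mem _ hp)

theorem sub_hyperplaneStep_mem_range_abaffianUpdate_iff {H : Matrix n n K} {a w p : n → K} {β : K}
    (hpH : p ∈ LinearMap.range H.vecMulLinear) (hp : a ⬝ᵥ p ≠ 0) (hw : w ⬝ᵥ (H *ᵥ a) ≠ 0)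
    (x y : n → K) :
    y - hyperplaneStep a β p x ∈ LinearMap.range (abaffianUpdate H a w).vecMulLinear ↔
      y - x ∈ LinearMap.range H.vecMulLinear ∧ a ⬝ᵥ y = β := by
  rw [mem_range_vecMulLinear_abaffianUpdate hw, sub_hyperplaneStep_mem_iff hpH, dotProduct_sub,
    dotProduct_hyperplaneStep hp, sub_eq_zero]

theorem sub_abaffian_iterate_mem_range_iff {m : ℕ} {a w p : Fin m → n → K} {β : Fin m → K}
    {H : ℕ → Matrix n n K} {x : ℕ → n → K}
    (hpH : ∀ i : Fin m, p i ∈ LinearMap.range (H i).vecMulLinear)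
    (hp : ∀ i, a i ⬝ᵥ p i ≠ 0)
    (hx : ∀ i : Fin m, x (i + 1) = hyperplaneStep (a i) (β i) (p i) (x i))
    (hw : ∀ i : Fin m, w i ⬝ᵥ (H i *ᵥ a i) ≠ 0)
    (hH : ∀ i : Fin m, H (i + 1) = abaffianUpdate (H i) (a i) (w i)) (y : n → K) :
    y - x m ∈ LinearMap.range (H m).vecMulLinear ↔
      y - x 0 ∈ LinearMap.range (H 0).vecMulLinear ∧ ∀ i, a i ⬝ᵥ y = β i := by
  induction m with
  | zero => simp only [IsEmpty.forall_iff, and_true]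
  | succ m ih =>
    have hinit := ih (fun i => hpH i.castSucc) (fun i => hp i.castSucc) (fun i => hx i.castSucc)
      (fun i => hw i.castSucc) (fun i => hH i.castSucc)
    have hlast : y - x (m + 1) ∈ LinearMap.range (H (m + 1)).vecMulLinear ↔
        y - x m ∈ LinearMap.range (H m).vecMulLinear ∧ a (Fin.last m) ⬝ᵥ y = β (Fin.last m) := by
      rw [show x (m + 1) = _ from hx (Fin.last m), show H (m + 1) = _ from hH (Fin.last m)]
      exact sub_hyperplaneStep_mem_range_abaffianUpdate_iff (hpH _) (hp _) (hw _) (x m) y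
    rw [hlast, hinit, and_assoc, Fin.forall_fin_succ']

end ABS

theorem forall_dotProduct_eq_iff_of_isUnit_det {R ι : Type*} [CommRing R] [Fintype ι]
    [DecidableEq ι] {v : ι → ι → R} (hv : IsUnit (of fun a i => v i a).det) {c d : ι → R} :
    (∀ i, v i ⬝ᵥ c = v i ⬝ᵥ d) ↔ c = d := by
  have hinj : Function.Injective (of v).mulVec := by
    apply mulVec_injective_of_isUnit
    rw [isUnit_iff_isUnit_det, ← det_transpose]
    exact hv
  rw [← hinj.eq_iff, funext_iff]
  rfl

theorem exists_eq_add_transpose_mulVec_iff {R m n : Type*} [CommRing R] [Fintype m]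
    (M : Matrix m n R) (x y : n → R) :
    (∃ q, y = x + Mᵀ *ᵥ q) ↔ y - x ∈ LinearMap.range M.vecMulLinear := by
  simp only [LinearMap.mem_range, vecMulLinear_apply, mulVec_transpose, eq_sub_iff_add_eq',
    eq_comm]

theorem exists_eq_add_transpose_mulVec_of_isUnit_det {R n : Type*} [CommRing R] [Fintype n]
    [DecidableEq n] {M : Matrix n n R} (hM : IsUnit M.det) (x y : n → R) :
    ∃ q, y = x + Mᵀ *ᵥ q := by
  rw [exists_eq_add_transpose_mulVec_iff]
  exact vecMul_surjective_iff_isUnit.mpr ((isUnit_iff_isUnit_det M).mpr hM) (y - x)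

theorem scaledABS_general_solution_general {K n : Type*} [Field K] [Fintype n] {m : ℕ}
    {A : Matrix (Fin m) n K} {b : Fin m → K}
    {H : ℕ → Matrix n n K} {x : ℕ → n → K}
    {v : Fin m → Fin m → K} {z w p : Fin m → n → K}
    (hV : IsUnit (Matrix.of fun a i : Fin m => v i a).det)
    (hp : ∀ i : Fin m, p i = (H i)ᵀ *ᵥ z i)
    (hpden : ∀ i : Fin m, v i ⬝ᵥ (A *ᵥ p i) ≠ 0)
    (hx : ∀ i : Fin m,
      x (i + 1) = x i - ((v i ⬝ᵥ (A *ᵥ x i - b)) / (v i ⬝ᵥ (A *ᵥ p i))) • p i)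
    (hHden : ∀ i : Fin m, w i ⬝ᵥ (H i *ᵥ (Aᵀ *ᵥ v i)) ≠ 0)
    (hH : ∀ i : Fin m,
      H (i + 1) = H i -
        (w i ⬝ᵥ (H i *ᵥ (Aᵀ *ᵥ v i)))⁻¹ •
          vecMulVec (H i *ᵥ (Aᵀ *ᵥ v i)) (w i ᵥ* H i))
    (y : n → K) :
    (∃ q, y = x m + (H m)ᵀ *ᵥ q) ↔ (∃ q, y = x 0 + (H 0)ᵀ *ᵥ q) ∧ A *ᵥ y = b := by
  have dotProduct_scaled (i : Fin m) (u : n → K) : v i ⬝ᵥ (A *ᵥ u) = (Aᵀ *ᵥ v i) ⬝ᵥ u := by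
    rw [dotProduct_mulVec, mulVec_transpose]
  have hpH (i : Fin m) : p i ∈ LinearMap.range (H i).vecMulLinear :=
    ⟨z i, by rw [hp, mulVec_transpose, vecMulLinear_apply]⟩
  simp only [dotProduct_sub, dotProduct_scaled] at hpden hx
  simp only [exists_eq_add_transpose_mulVec_iff, ← forall_dotProduct_eq_iff_of_isUnit_det hV,
    dotProduct_scaled]
  exact sub_abaffian_iterate_mem_range_iff hpH hpden hx hHden hH y

/-- Under the scaled ABS recursion (with `H 0 = H₁`, `x 0 = x₁`, so `x m = x_{m+1}`
and `H m = H_{m+1}`), if `A` has full row rank and `V = (v₁,…,v_m)` is nonsingular,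
then the solution set of `A x = b` is exactly `{ x_{m+1} + H_{m+1}ᵀ q : q ∈ ℝⁿ }`. -/
theorem scaledABS_general_solution
    (m n : ℕ) (hmn : m ≤ n)
    (A : Matrix (Fin m) (Fin n) ℝ) (b : Fin m → ℝ)
    (hA : LinearIndependent ℝ (fun i : Fin m => A i))
    (H : ℕ → Matrix (Fin n) (Fin n) ℝ) (x : ℕ → Fin n → ℝ)
    (v : Fin m → Fin m → ℝ) (z w : Fin m → Fin n → ℝ)
    (p : Fin m → Fin n → ℝ)
    (hH0 : IsUnit (H 0).det)
    (hV : IsUnit (Matrix.of fun a i : Fin m => v i a).det)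
    (hp : ∀ i : Fin m, p i = (H ↑i)ᵀ *ᵥ z i)
    (hpden : ∀ i : Fin m, v i ⬝ᵥ (A *ᵥ p i) ≠ 0)
    (hx : ∀ i : Fin m,
      x (↑i + 1) = x ↑i - ((v i ⬝ᵥ (A *ᵥ x ↑i - b)) / (v i ⬝ᵥ (A *ᵥ p i))) • p i)
    (hHden : ∀ i : Fin m, w i ⬝ᵥ (H ↑i *ᵥ (Aᵀ *ᵥ v i)) ≠ 0)
    (hH : ∀ i : Fin m,
      H (↑i + 1) = H ↑i -
        (w i ⬝ᵥ (H ↑i *ᵥ (Aᵀ *ᵥ v i)))⁻¹ •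
          vecMulVec (H ↑i *ᵥ (Aᵀ *ᵥ v i)) (w i ᵥ* H ↑i)) :
    ∀ y : Fin n → ℝ, A *ᵥ y = b ↔ ∃ q : Fin n → ℝ, y = x m + (H m)ᵀ *ᵥ q := by
  intro y
  rw [scaledABS_general_solution_general hV hp hpden hx hHden hH,
    and_iff_right (exists_eq_add_transpose_mulVec_of_isUnit_det hH0 _ _)]
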